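/- arXiv:2206.13912 — 2 statements merged into one kernel-verified Lean document; each statement's English description precedes it below -/
import Mathlib

section
/- Let A₁ and A₂ be finite-dimensional simple evolution algebras over a field K. Suppose that for some i ∈ {1,2} the algebra A_i has a natural basis {e_j} and an index j such that the e_j-coordinate of e_j² is nonzero (i.e., the directed graph of A_i has a loop, equivalently dim Diag(A_i) > 0). Then A₁ ⊗_K A₂ (with multiplication (a⊗b)(a'⊗b') = aa' ⊗ bb') is a simple algebra. -/
open scoped TensorProduct

/-!
For an algebra with a natural basis, multiplying by a basis vector extracts a coordinate, so an
ideal contains the square of every basis vector in the support of one of its elements. Hence the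
algebra is simple exactly when it is nonzero, is spanned by the squares of the basis vectors, and
has a strongly connected graph. The graph of a tensor product is the direct product of the two
graphs, whose edges move both coordinates at once. If the first graph has a loop at `i₀`, then
`(i, j)` is joined to `(k, l)` by moving the first coordinate from `i` to `i₀`, letting it wait on
the loop while the second coordinate is adjusted, and then moving it from `i₀` to `k`.
-/

namespace EvolutionAlgebra

open Function Module Relation Submodule

section TransGenRProd

variable {α β : Type*} {r : α → α → Prop} {s : β → β → Prop}

theorem exists_transGen_rprod_from (hs : ∀ j, ∃ l, s j l) {i k : α} (hik : TransGen r i k)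
    (j : β) : ∃ l, TransGen (Prod.RProd r s) (i, j) (k, l) := by
  induction hik with
  | single hik => exact (hs j).imp fun _ hjl => .single ⟨hik, hjl⟩
  | tail _ hmk ih =>
    obtain ⟨m, hm⟩ := ih
    exact (hs m).imp fun _ hml => hm.tail ⟨hmk, hml⟩

theorem exists_transGen_rprod_to (hs : ∀ l, ∃ j, s j l) {i k : α} (hik : TransGen r i k)
    (l : β) : ∃ j, TransGen (Prod.RProd r s) (i, j) (k, l) := by
  induction hik using TransGen.head_induction_on with
  | single hik => exact (hs l).imp fun _ hjl => .single ⟨hik, hjl⟩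
  | head him _ ih =>
    obtain ⟨m, hm⟩ := ih
    exact (hs m).imp fun _ hjm => hm.head ⟨him, hjm⟩

theorem transGen_rprod_of_loop_left (hr : ∀ i k, TransGen r i k) (hs : ∀ j l, TransGen s j l)
    {i₀ : α} (hloop : r i₀ i₀) (p q : α × β) : TransGen (Prod.RProd r s) p q := by
  have s_out (j : β) : ∃ l, s j l := (TransGen.head'_iff.1 (hs j j)).imp fun _ => And.left
  have s_in (l : β) : ∃ j, s j l := (TransGen.tail'_iff.1 (hs l l)).imp fun _ => And.right
  obtain ⟨j, reach_loop⟩ := exists_transGen_rprod_from s_out (hr p.1 i₀) p.2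
  obtain ⟨l, leave_loop⟩ := exists_transGen_rprod_to s_in (hr i₀ q.1) q.2
  have wait_at_loop : TransGen (Prod.RProd r s) (i₀, j) (i₀, l) :=
    TransGen.lift (Prod.mk i₀) (fun _ _ h => ⟨hloop, h⟩) _ _ (hs j l)
  exact (reach_loop.trans wait_at_loop).trans leave_loop

theorem transGen_rprod_of_loop (hr : ∀ i k, TransGen r i k) (hs : ∀ j l, TransGen s j l)
    (hloop : (∃ i, r i i) ∨ ∃ j, s j j) (p q : α × β) : TransGen (Prod.RProd r s) p q := by
  rcases hloop with ⟨i, hi⟩ | ⟨j, hj⟩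
  · exact transGen_rprod_of_loop_left hr hs hi p q
  · have swap_rprod : Prod.RProd s r ≤ (Prod.RProd r s on Prod.swap) :=
      fun _ _ ⟨h₂, h₁⟩ => ⟨h₁, h₂⟩
    exact TransGen.lift Prod.swap swap_rprod _ _
      (transGen_rprod_of_loop_left hs hr hj p.swap q.swap)

end TransGenRProd

section Definitions

variable {ι R A : Type*} [Semiring R] [NonUnitalNonAssocSemiring A] [Module R A]

/-- A natural basis of an algebra: products of distinct basis vectors vanish. An evolution algebra
is an algebra admitting such a basis. -/
def IsNaturalBasis (b : Basis ι R A) : Prop :=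
  Pairwise fun i j => b i * b j = 0

/-- The edge relation of the directed graph attached to a basis of an algebra: there is an edge from
`i` to `j` when `b j` occurs in `b i * b i`. -/
def Edge (b : Basis ι R A) (i j : ι) : Prop :=
  b.repr (b i * b i) j ≠ 0

/-- Two-sided ideals of an algebra, as a predicate on submodules: a `TwoSidedIdeal` of a nonunital
ring need not be closed under scalars. -/
def IsIdeal (I : Submodule R A) : Prop :=
  ∀ x ∈ I, ∀ a : A, a * x ∈ I ∧ x * a ∈ I

variable (R A) in
/-- Simple algebras: the multiplication is nonzero and there are no two-sided ideals other than `⊥`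
and `⊤`. -/
def IsSimpleAlgebra : Prop :=
  (∃ x y : A, x * y ≠ 0) ∧ ∀ I : Submodule R A, IsIdeal I → I = ⊥ ∨ I = ⊤

end Definitions

section NaturalBasis

variable {ι R A : Type*} [Semiring R] [NonUnitalNonAssocSemiring A] [Module R A]
  {b : Basis ι R A}

theorem exists_edge_to [Nontrivial R] (hspan : span R (Set.range fun i => b i * b i) = ⊤) (k : ι) :
    ∃ i, Edge b i k := by
  by_contra! no_edge
  have coord_eq_zero : span R (Set.range fun i => b i * b i) ≤ LinearMap.ker (b.coord k) := by
    rw [span_le]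
    rintro _ ⟨i, rfl⟩
    exact not_not.1 (no_edge i)
  have : b.coord k (b k) = 0 := coord_eq_zero (hspan ▸ mem_top)
  simp at this

namespace IsNaturalBasis

theorem mul_basis [IsScalarTower R A A] (hb : IsNaturalBasis b) (x : A) (i : ι) :
    x * b i = b.repr x i • (b i * b i) := by
  have : LinearMap.mulRight R (b i) = (b.coord i).smulRight (b i * b i) := b.ext fun j => by
    obtain rfl | hji := eq_or_ne j i
    · simp
    · simp [hb hji, hji]
  exact LinearMap.congr_fun this x

theorem basis_mul [SMulCommClass R A A] (hb : IsNaturalBasis b) (x : A) (i : ι) :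
    b i * x = b.repr x i • (b i * b i) := by
  have : LinearMap.mulLeft R (b i) = (b.coord i).smulRight (b i * b i) := b.ext fun j => by
    obtain rfl | hji := eq_or_ne j i
    · simp
    · simp [hb hji.symm, hji]
  exact LinearMap.congr_fun this x

variable [SMulCommClass R A A] [IsScalarTower R A A]

protected theorem mul_comm (hb : IsNaturalBasis b) (x y : A) : x * y = y * x := by
  have : LinearMap.mulLeft R x = LinearMap.mulRight R x :=
    b.ext fun i => (hb.mul_basis x i).trans (hb.basis_mul x i).symm
  exact LinearMap.congr_fun this y

protected theorem mul_mem (hb : IsNaturalBasis b) {I : Submodule R A} {x : A}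
    (hx : ∀ i, b.repr x i ≠ 0 → b i * b i ∈ I) (a : A) : x * a ∈ I := by
  have : span R (Set.range b) ≤ I.comap (LinearMap.mulLeft R x) := by
    rw [span_le]
    rintro _ ⟨i, rfl⟩
    change x * b i ∈ I
    rw [hb.mul_basis]
    by_cases hi : b.repr x i = 0
    · simp [hi]
    · exact I.smul_mem _ (hx i hi)
  exact this (b.mem_span a)

theorem isIdeal_of_sq_mem (hb : IsNaturalBasis b) {I : Submodule R A}
    (hI : ∀ x ∈ I, ∀ i, b.repr x i ≠ 0 → b i * b i ∈ I) : IsIdeal I := fun x hx a =>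
  have hxa : x * a ∈ I := hb.mul_mem (hI x hx) a
  ⟨hb.mul_comm x a ▸ hxa, hxa⟩

theorem span_sq_eq_top (hb : IsNaturalBasis b) (hA : IsSimpleAlgebra R A) :
    span R (Set.range fun i => b i * b i) = ⊤ := by
  have sq_mem (i : ι) : b i * b i ∈ span R (Set.range fun i => b i * b i) := subset_span ⟨i, rfl⟩
  refine (hA.2 _ (hb.isIdeal_of_sq_mem fun _ _ i _ => sq_mem i)).resolve_left fun hbot => ?_
  obtain ⟨x, y, hxy⟩ := hA.1
  exact hxy ((mem_bot R).1 (hb.mul_mem (fun i _ => hbot ▸ sq_mem i) y))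

theorem isIdeal_span_image (hb : IsNaturalBasis b) {T : Set ι}
    (hT : ∀ i ∈ T, ∀ k, Edge b i k → k ∈ T) : IsIdeal (span R (b '' T)) := by
  refine hb.isIdeal_of_sq_mem fun x hx i hi => ?_
  rw [b.mem_span_image] at hx ⊢
  exact fun k hk => hT i (hx (Finsupp.mem_support_iff.2 hi)) k (Finsupp.mem_support_iff.1 hk)

theorem reflTransGen_edge [Nontrivial R] (hb : IsNaturalBasis b) (hA : IsSimpleAlgebra R A)
    (i j : ι) : ReflTransGen (Edge b) i j := by
  let T : Set ι := {k | ReflTransGen (Edge b) i k}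
  have span_ne_bot : span R (b '' T) ≠ ⊥ := fun hbot =>
    b.ne_zero i ((mem_bot R).1 (hbot ▸ subset_span ⟨i, .refl, rfl⟩))
  have span_eq_top : span R (b '' T) = ⊤ :=
    (hA.2 _ (hb.isIdeal_span_image fun _ hk _ hkl => hk.tail hkl)).resolve_left span_ne_bot
  have support_subset : ↑(b.repr (b j)).support ⊆ T :=
    b.mem_span_image.1 (span_eq_top ▸ mem_top)
  exact support_subset (by simp)

theorem transGen_edge [Nontrivial R] (hb : IsNaturalBasis b) (hA : IsSimpleAlgebra R A)
    (i j : ι) : TransGen (Edge b) i j := by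
  obtain ⟨k, hkj⟩ := exists_edge_to (hb.span_sq_eq_top hA) j
  exact .tail' (hb.reflTransGen_edge hA i k) hkj

end IsNaturalBasis

end NaturalBasis

section SimplicityCriterion

variable {ι K A : Type*} [DivisionSemiring K] [NonUnitalNonAssocSemiring A] [Module K A]
  {b : Basis ι K A}

namespace IsNaturalBasis

theorem sq_mem_of_isIdeal [IsScalarTower K A A] (hb : IsNaturalBasis b) {I : Submodule K A}
    (hI : IsIdeal I) {x : A} (hx : x ∈ I) {i : ι} (hi : b.repr x i ≠ 0) : b i * b i ∈ I := by
  have : x * b i ∈ I := (hI x hx (b i)).2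
  rwa [hb.mul_basis, I.smul_mem_iff hi] at this

theorem eq_bot_or_eq_top_of_isIdeal [IsScalarTower K A A] (hb : IsNaturalBasis b)
    (hspan : span K (Set.range fun i => b i * b i) = ⊤)
    (hconn : ∀ i j, ReflTransGen (Edge b) i j) {I : Submodule K A} (hI : IsIdeal I) :
    I = ⊥ ∨ I = ⊤ := by
  refine or_iff_not_imp_left.2 fun hne => ?_
  obtain ⟨x, hx, hx0⟩ := I.exists_mem_ne_zero_of_ne_bot hne
  obtain ⟨i, hi⟩ : ∃ i, b.repr x i ≠ 0 :=
    Finsupp.ne_iff.1 fun h => hx0 (b.repr.map_eq_zero_iff.1 h)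
  have sq_mem (j : ι) : b j * b j ∈ I := by
    induction hconn i j with
    | refl => exact hb.sq_mem_of_isIdeal hI hx hi
    | tail _ hjk ih => exact hb.sq_mem_of_isIdeal hI ih hjk
  rw [eq_top_iff, ← hspan, span_le]
  exact Set.range_subset_iff.2 sq_mem

theorem isSimpleAlgebra_iff [SMulCommClass K A A] [IsScalarTower K A A] (hb : IsNaturalBasis b) :
    IsSimpleAlgebra K A ↔ Nonempty ι ∧ span K (Set.range fun i => b i * b i) = ⊤ ∧
      ∀ i j, TransGen (Edge b) i j := by
  constructor
  · intro hA
    obtain ⟨x, y, hxy⟩ := hA.1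
    have : Nontrivial A := ⟨_, _, hxy⟩
    exact ⟨b.index_nonempty, hb.span_sq_eq_top hA, hb.transGen_edge hA⟩
  · rintro ⟨⟨j⟩, hspan, hconn⟩
    obtain ⟨i, hij⟩ := exists_edge_to hspan j
    have sq_ne_zero : b i * b i ≠ 0 := fun h => hij (by simp [h])
    exact ⟨⟨b i, b i, sq_ne_zero⟩, fun _ =>
      hb.eq_bot_or_eq_top_of_isIdeal hspan fun i j => (hconn i j).to_reflTransGen⟩

end IsNaturalBasis

end SimplicityCriterion

section TensorProduct

variable {ι₁ ι₂ R A₁ A₂ : Type*} [CommSemiring R]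
  [NonUnitalNonAssocSemiring A₁] [Module R A₁] [SMulCommClass R A₁ A₁] [IsScalarTower R A₁ A₁]
  [NonUnitalNonAssocSemiring A₂] [Module R A₂] [SMulCommClass R A₂ A₂] [IsScalarTower R A₂ A₂]
  {b₁ : Basis ι₁ R A₁} {b₂ : Basis ι₂ R A₂}

theorem tensorProduct_basis_mul (p q : ι₁ × ι₂) :
    b₁.tensorProduct b₂ p * b₁.tensorProduct b₂ q =
      (b₁ p.1 * b₁ q.1) ⊗ₜ[R] (b₂ p.2 * b₂ q.2) := by
  simp only [Basis.tensorProduct_apply', Algebra.TensorProduct.tmul_mul_tmul]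

theorem IsNaturalBasis.tensorProduct (hb₁ : IsNaturalBasis b₁) (hb₂ : IsNaturalBasis b₂) :
    IsNaturalBasis (b₁.tensorProduct b₂) := by
  intro p q hpq
  simp only [tensorProduct_basis_mul]
  obtain h | h : p.1 ≠ q.1 ∨ p.2 ≠ q.2 := by rwa [Ne, Prod.ext_iff, not_and_or] at hpq
  · rw [hb₁ h, TensorProduct.zero_tmul]
  · rw [hb₂ h, TensorProduct.tmul_zero]

theorem edge_tensorProduct [NoZeroDivisors R] :
    Edge (b₁.tensorProduct b₂) = Prod.RProd (Edge b₁) (Edge b₂) := by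
  ext ⟨i, j⟩ ⟨k, l⟩
  have edge_iff : Edge (b₁.tensorProduct b₂) (i, j) (k, l) ↔ Edge b₁ i k ∧ Edge b₂ j l := by
    rw [Edge, tensorProduct_basis_mul, Basis.tensorProduct_repr_tmul_apply, smul_eq_mul,
      mul_ne_zero_iff, and_comm, Edge, Edge]
  exact edge_iff.trans ⟨fun ⟨h₁, h₂⟩ => ⟨h₁, h₂⟩, fun ⟨h₁, h₂⟩ => ⟨h₁, h₂⟩⟩

theorem span_sq_tensorProduct_eq_top
    (h₁ : span R (Set.range fun i => b₁ i * b₁ i) = ⊤)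
    (h₂ : span R (Set.range fun j => b₂ j * b₂ j) = ⊤) :
    span R (Set.range fun p => b₁.tensorProduct b₂ p * b₁.tensorProduct b₂ p) = ⊤ := by
  simp only [tensorProduct_basis_mul]
  rw [← TensorProduct.map₂_mk_top_top_eq_top, ← h₁, ← h₂, map₂_span_span, Set.image2_range]
  rfl

end TensorProduct

end EvolutionAlgebra

open EvolutionAlgebra in
theorem tensor_simple_of_loop_general {K A₁ A₂ ι₁ ι₂ : Type*} [Semifield K]
    [NonUnitalNonAssocSemiring A₁] [Module K A₁]
    [SMulCommClass K A₁ A₁] [IsScalarTower K A₁ A₁]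
    [NonUnitalNonAssocSemiring A₂] [Module K A₂]
    [SMulCommClass K A₂ A₂] [IsScalarTower K A₂ A₂]
    {b₁ : Module.Basis ι₁ K A₁} (hb₁ : IsNaturalBasis b₁)
    {b₂ : Module.Basis ι₂ K A₂} (hb₂ : IsNaturalBasis b₂)
    (hA₁ : IsSimpleAlgebra K A₁) (hA₂ : IsSimpleAlgebra K A₂)
    (hloop : (∃ i, Edge b₁ i i) ∨ ∃ i, Edge b₂ i i) :
    IsSimpleAlgebra K (A₁ ⊗[K] A₂) := by
  obtain ⟨_, span₁, conn₁⟩ := hb₁.isSimpleAlgebra_iff.1 hA₁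
  obtain ⟨_, span₂, conn₂⟩ := hb₂.isSimpleAlgebra_iff.1 hA₂
  refine (hb₁.tensorProduct hb₂).isSimpleAlgebra_iff.2
    ⟨inferInstance, span_sq_tensorProduct_eq_top span₁ span₂, ?_⟩
  rw [edge_tensorProduct]
  exact transGen_rprod_of_loop conn₁ conn₂ hloop

/-- Let `A₁` and `A₂` be finite-dimensional simple evolution algebras over a
field `K`.  If for some factor the directed graph relative to a natural basis has a loop
(some `i` with the `e_i`-coordinate of `e_i²` nonzero, i.e. `dim Diag > 0`), then
`A₁ ⊗[K] A₂` is a simple algebra. -/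
theorem tensor_simple_of_loop {K A₁ A₂ : Type*} [Field K]
    [NonUnitalNonAssocCommRing A₁] [Module K A₁]
    [SMulCommClass K A₁ A₁] [IsScalarTower K A₁ A₁]
    [NonUnitalNonAssocCommRing A₂] [Module K A₂]
    [SMulCommClass K A₂ A₂] [IsScalarTower K A₂ A₂]
    {ι₁ ι₂ : Type*} [Fintype ι₁] [Fintype ι₂]
    (b₁ : Module.Basis ι₁ K A₁) (hn₁ : ∀ i j : ι₁, i ≠ j → b₁ i * b₁ j = 0)
    (b₂ : Module.Basis ι₂ K A₂) (hn₂ : ∀ i j : ι₂, i ≠ j → b₂ i * b₂ j = 0)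
    (hs₁ : (∃ x y : A₁, x * y ≠ 0) ∧
      ∀ I : Submodule K A₁, (∀ x ∈ I, ∀ a : A₁, a * x ∈ I ∧ x * a ∈ I) → I = ⊥ ∨ I = ⊤)
    (hs₂ : (∃ x y : A₂, x * y ≠ 0) ∧
      ∀ I : Submodule K A₂, (∀ x ∈ I, ∀ a : A₂, a * x ∈ I ∧ x * a ∈ I) → I = ⊥ ∨ I = ⊤)
    (hloop : (∃ i : ι₁, b₁.repr (b₁ i * b₁ i) i ≠ 0) ∨
      (∃ i : ι₂, b₂.repr (b₂ i * b₂ i) i ≠ 0)) :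
    (∃ x y : A₁ ⊗[K] A₂, x * y ≠ 0) ∧
      ∀ I : Submodule K (A₁ ⊗[K] A₂),
        (∀ x ∈ I, ∀ a : A₁ ⊗[K] A₂, a * x ∈ I ∧ x * a ∈ I) → I = ⊥ ∨ I = ⊤ :=
  tensor_simple_of_loop_general hn₁ hn₂ hs₁ hs₂ hloop
end

section
/- Let A₁ and A₂ be finite-dimensional evolution algebras over a field K, each of dimension greater than 1, and let A = A₁ ⊗_K A₂ with multiplication (a⊗b)(a'⊗b') = aa' ⊗ bb'. If I is a nonzero two-sided ideal of A of the form I = K·u for some u ∈ A, then the quotient algebra A/I is not simple. -/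
open scoped TensorProduct

/-!
Let `L` be a nonzero proper ideal of one factor, say of `A₁`.  Then `L ⊗ A₂ + K·u` is an ideal, and
it lies strictly between `K·u` and `A₁ ⊗ A₂`: contracting with a functional on `A₁` that is nonzero
on `L` maps `L ⊗ A₂` onto `A₂`, while contracting with a nonzero functional vanishing on `L` maps
`A₁ ⊗ A₂` onto `A₂` and `L ⊗ A₂ + K·u` into a line, whereas `dim A₂ > 1`.

It remains to find an ideal line in one of the factors.  Write `u = ∑ eᵢ ⊗ wᵢ` in a natural basis
`(eᵢ)` of `A₁` and pick `i` with `wᵢ ≠ 0`.  If `eᵢ² = 0`, then `K·eᵢ` is an ideal; if `wᵢ`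
annihilates `A₂`, then `K·wᵢ` is an ideal.  Otherwise some nonzero product `(eᵢ ⊗ y) u = eᵢ² ⊗ y wᵢ`
or `u (eᵢ ⊗ y) = eᵢ² ⊗ wᵢ y` spans `K·u`, so `u` may be taken to be a pure tensor `v ⊗ w`, and
comparing `(x ⊗ y)(v ⊗ w)` with `v ⊗ w` shows that `K·v` or `K·w` is an ideal.
-/

section Contractions

variable {R M N P : Type*} [CommSemiring R] [AddCommMonoid M] [Module R M] [AddCommMonoid N]
  [Module R N] [AddCommMonoid P] [Module R P]

theorem map₂_lsmul_comp (f : Module.Dual R M) (p : Submodule R M) (q : Submodule R N) :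
    Submodule.map₂ (LinearMap.lsmul R N ∘ₗ f) p q = p.map f • q := by
  rw [Submodule.smul_eq_map₂, Submodule.map₂_map_left]

theorem map_lift_map₂_mk (B : M →ₗ[R] N →ₗ[R] P) (p : Submodule R M) (q : Submodule R N) :
    (Submodule.map₂ (TensorProduct.mk R M N) p q).map (TensorProduct.lift B) =
      Submodule.map₂ B p q := by
  rw [Submodule.map_map₂]
  exact congrArg (Submodule.map₂ · p q) (LinearMap.ext₂ fun _ _ ↦ TensorProduct.lift.tmul _ _)

end Contractions

section VectorSpaces

variable {K M N P : Type*} [Field K] [AddCommGroup M] [Module K M] [AddCommGroup N] [Module K N]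
  [AddCommGroup P] [Module K P]

theorem span_singleton_ne_top_of_one_lt_rank (hM : 1 < Module.rank K M) (v : M) :
    Submodule.span K {v} ≠ ⊤ := fun h ↦
  hM.not_ge (rank_le_one_iff.2 ⟨v, (Submodule.span_singleton_eq_top_iff K v).1 h⟩)

theorem mem_span_singleton_of_tmul_mem_span_tmul {x v : M} {y w : N}
    (h : x ⊗ₜ[K] y ∈ Submodule.span K {v ⊗ₜ[K] w}) (hy : y ≠ 0) : x ∈ Submodule.span K {v} := by
  obtain ⟨c, hc⟩ := Submodule.mem_span_singleton.1 h
  obtain ⟨f, hf⟩ := Module.Projective.exists_dual_eq_one K hy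
  have hx := congrArg (TensorProduct.rid K M ∘ f.lTensor M) hc
  simp only [Function.comp_apply, map_smul, LinearMap.lTensor_tmul, TensorProduct.rid_tmul, hf,
    one_smul, smul_smul] at hx
  exact Submodule.mem_span_singleton.2 ⟨c * f w, hx⟩

theorem tmul_ne_zero_of_ne_zero {x : M} {y : N} (hx : x ≠ 0) (hy : y ≠ 0) : x ⊗ₜ[K] y ≠ 0 := by
  intro h
  have hmem : x ∈ Submodule.span K {(0 : M)} :=
    mem_span_singleton_of_tmul_mem_span_tmul (w := y) (h ▸ Submodule.zero_mem _) hy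
  exact hx (by simpa using hmem)

theorem map_dual_eq_top_of_apply_ne_zero {p : Submodule K M} {f : Module.Dual K M} {x : M}
    (hx : x ∈ p) (hfx : f x ≠ 0) : p.map f = ⊤ :=
  (eq_bot_or_eq_top (p.map f)).resolve_left fun h ↦
    hfx ((Submodule.eq_bot_iff _).1 h _ (Submodule.mem_map_of_mem hx))

theorem exists_map₂_top_eq_top {p : Submodule K M} (hp : p ≠ ⊥) :
    ∃ B : M →ₗ[K] N →ₗ[K] N, Submodule.map₂ B p ⊤ = ⊤ := by
  obtain ⟨x, hxp, hx⟩ := p.exists_mem_ne_zero_of_ne_bot hp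
  obtain ⟨f, hf⟩ := Module.Projective.exists_dual_eq_one K hx
  refine ⟨LinearMap.lsmul K N ∘ₗ f, ?_⟩
  rw [map₂_lsmul_comp, map_dual_eq_top_of_apply_ne_zero hxp (hf ▸ one_ne_zero),
    Submodule.top_smul]

theorem exists_map₂_top_eq_bot {p : Submodule K M} (hp : p ≠ ⊤) :
    ∃ B : M →ₗ[K] N →ₗ[K] N, Submodule.map₂ B p ⊤ = ⊥ ∧ Submodule.map₂ B ⊤ ⊤ = ⊤ := by
  obtain ⟨f, hf, hfp⟩ := Submodule.exists_dual_map_eq_bot_of_lt_top hp.lt_top inferInstance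
  obtain ⟨x, hx⟩ := DFunLike.ne_iff.1 hf
  refine ⟨LinearMap.lsmul K N ∘ₗ f, ?_, ?_⟩
  · rw [map₂_lsmul_comp, hfp, Submodule.bot_smul]
  · rw [map₂_lsmul_comp, map_dual_eq_top_of_apply_ne_zero Submodule.mem_top hx,
      Submodule.top_smul]

theorem span_singleton_lt_map₂_mk_sup (hP : 1 < Module.rank K P) {p : Submodule K M}
    {q : Submodule K N} {B : M →ₗ[K] N →ₗ[K] P} (hB : Submodule.map₂ B p q = ⊤) (u : M ⊗[K] N) :
    Submodule.span K {u} <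
      Submodule.map₂ (TensorProduct.mk K M N) p q ⊔ Submodule.span K {u} := by
  refine right_lt_sup.2 fun hle ↦
    span_singleton_ne_top_of_one_lt_rank hP (TensorProduct.lift B u) (top_unique ?_)
  calc ⊤ = (Submodule.map₂ (TensorProduct.mk K M N) p q).map (TensorProduct.lift B) := by
        rw [map_lift_map₂_mk, hB]
    _ ≤ (Submodule.span K {u}).map (TensorProduct.lift B) := Submodule.map_mono hle
    _ = Submodule.span K {TensorProduct.lift B u} := by
        rw [Submodule.map_span, Set.image_singleton]

theorem map₂_mk_sup_span_singleton_lt_top (hP : 1 < Module.rank K P) {p : Submodule K M}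
    {q : Submodule K N} {B : M →ₗ[K] N →ₗ[K] P} (hpq : Submodule.map₂ B p q = ⊥)
    (htop : Submodule.map₂ B ⊤ ⊤ = ⊤) (u : M ⊗[K] N) :
    Submodule.map₂ (TensorProduct.mk K M N) p q ⊔ Submodule.span K {u} < ⊤ := by
  refine lt_top_iff_ne_top.2 fun h ↦
    span_singleton_ne_top_of_one_lt_rank hP (TensorProduct.lift B u) ?_
  calc Submodule.span K {TensorProduct.lift B u}
    _ = (Submodule.map₂ (TensorProduct.mk K M N) p q ⊔ Submodule.span K {u}).map
          (TensorProduct.lift B) := by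
        rw [Submodule.map_sup, map_lift_map₂_mk, hpq, bot_sup_eq, Submodule.map_span,
          Set.image_singleton]
    _ = ⊤ := by rw [h, ← TensorProduct.map₂_mk_top_top_eq_top, map_lift_map₂_mk, htop]

end VectorSpaces

/-- `J` is a two-sided ideal of the algebra `A`.  Mathlib's `TwoSidedIdeal` is a ring congruence
and does not record stability under `R`, which matters because `A` need not have
a unit. -/
def IsTwoSidedIdeal {R A : Type*} [CommSemiring R] [NonUnitalNonAssocSemiring A] [Module R A]
    (J : Submodule R A) : Prop :=
  ∀ x ∈ J, ∀ a : A, a * x ∈ J ∧ x * a ∈ J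

/-- `b` is a natural basis, i.e. it exhibits `A` as an evolution algebra. -/
def IsNaturalBasis {R A ι : Type*} [CommSemiring R] [NonUnitalNonAssocSemiring A] [Module R A]
    (b : Module.Basis ι R A) : Prop :=
  ∀ i j : ι, i ≠ j → b i * b j = 0

section Ideals

variable {R A : Type*} [CommSemiring R] [NonUnitalNonAssocSemiring A] [Module R A]

theorem isTwoSidedIdeal_top : IsTwoSidedIdeal (⊤ : Submodule R A) :=
  fun _ _ _ ↦ ⟨Submodule.mem_top, Submodule.mem_top⟩

theorem IsTwoSidedIdeal.sup {I J : Submodule R A} (hI : IsTwoSidedIdeal I)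
    (hJ : IsTwoSidedIdeal J) : IsTwoSidedIdeal (I ⊔ J) := by
  intro x hx a
  obtain ⟨y, hy, z, hz, rfl⟩ := Submodule.mem_sup.1 hx
  rw [mul_add, add_mul]
  exact ⟨Submodule.add_mem_sup (hI y hy a).1 (hJ z hz a).1,
    Submodule.add_mem_sup (hI y hy a).2 (hJ z hz a).2⟩

section SpanSingleton

variable [SMulCommClass R A A] [IsScalarTower R A A] {v : A}

theorem isTwoSidedIdeal_span_singleton
    (hl : ∀ a : A, a * v ∈ Submodule.span R {v}) (hr : ∀ a : A, v * a ∈ Submodule.span R {v}) :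
    IsTwoSidedIdeal (Submodule.span R {v}) := by
  intro x hx a
  obtain ⟨c, rfl⟩ := Submodule.mem_span_singleton.1 hx
  rw [mul_smul_comm, smul_mul_assoc]
  exact ⟨Submodule.smul_mem _ c (hl a), Submodule.smul_mem _ c (hr a)⟩

theorem exists_mul_ne_zero_of_not_isTwoSidedIdeal_span_singleton
    (hv : ¬ IsTwoSidedIdeal (Submodule.span R {v})) : ∃ a : A, a * v ≠ 0 ∨ v * a ≠ 0 := by
  by_contra! h
  exact hv (isTwoSidedIdeal_span_singleton (fun a ↦ (h a).1 ▸ Submodule.zero_mem _)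
    fun a ↦ (h a).2 ▸ Submodule.zero_mem _)

end SpanSingleton

namespace IsNaturalBasis

variable {ι : Type*} {b : Module.Basis ι R A}

theorem basis_mul_eq_smul [SMulCommClass R A A] (hb : IsNaturalBasis b) (i : ι) (x : A) :
    b i * x = b.repr x i • (b i * b i) := by
  have h : LinearMap.mulLeft R (b i) = (b.coord i).smulRight (b i * b i) := by
    refine b.ext fun j ↦ ?_
    obtain rfl | hij := eq_or_ne i j
    · simp
    · simp [hb i j hij, hij.symm]
  exact LinearMap.congr_fun h x

theorem mul_basis_eq_smul [IsScalarTower R A A] (hb : IsNaturalBasis b) (i : ι) (x : A) :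
    x * b i = b.repr x i • (b i * b i) := by
  have h : LinearMap.mulRight R (b i) = (b.coord i).smulRight (b i * b i) := by
    refine b.ext fun j ↦ ?_
    obtain rfl | hij := eq_or_ne i j
    · simp
    · simp [hb j i hij.symm, hij.symm]
  exact LinearMap.congr_fun h x

theorem mul_self_ne_zero_of_not_isTwoSidedIdeal_span_singleton [SMulCommClass R A A]
    [IsScalarTower R A A] (hb : IsNaturalBasis b) {i : ι}
    (hi : ¬ IsTwoSidedIdeal (Submodule.span R {b i})) : b i * b i ≠ 0 := by
  intro hsq
  obtain ⟨a, ha | ha⟩ := exists_mul_ne_zero_of_not_isTwoSidedIdeal_span_singleton hi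
  · exact ha (by rw [hb.mul_basis_eq_smul, hsq, smul_zero])
  · exact ha (by rw [hb.basis_mul_eq_smul, hsq, smul_zero])

end IsNaturalBasis

end Ideals

section TensorIdeals

variable {R A₁ A₂ : Type*} [CommSemiring R]
  [NonUnitalNonAssocSemiring A₁] [Module R A₁] [SMulCommClass R A₁ A₁] [IsScalarTower R A₁ A₁]
  [NonUnitalNonAssocSemiring A₂] [Module R A₂] [SMulCommClass R A₂ A₂] [IsScalarTower R A₂ A₂]

theorem IsTwoSidedIdeal.map₂_mk {I : Submodule R A₁} {J : Submodule R A₂}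
    (hI : IsTwoSidedIdeal I) (hJ : IsTwoSidedIdeal J) :
    IsTwoSidedIdeal (Submodule.map₂ (TensorProduct.mk R A₁ A₂) I J) := by
  set T := Submodule.map₂ (TensorProduct.mk R A₁ A₂) I J
  intro x hx a
  induction a with
  | zero => simp
  | add a b ha hb =>
    rw [add_mul, mul_add]
    exact ⟨T.add_mem ha.1 hb.1, T.add_mem ha.2 hb.2⟩
  | tmul a b =>
    suffices h : T ≤ T.comap (LinearMap.mulLeft R (a ⊗ₜ[R] b)) ⊓
        T.comap (LinearMap.mulRight R (a ⊗ₜ[R] b)) from h hx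
    refine Submodule.map₂_le.2 fun y hy z hz ↦ ⟨?_, ?_⟩
    · change (a ⊗ₜ[R] b) * (y ⊗ₜ[R] z) ∈ T
      rw [Algebra.TensorProduct.tmul_mul_tmul]
      exact Submodule.apply_mem_map₂ _ (hI y hy a).1 (hJ z hz b).1
    · change (y ⊗ₜ[R] z) * (a ⊗ₜ[R] b) ∈ T
      rw [Algebra.TensorProduct.tmul_mul_tmul]
      exact Submodule.apply_mem_map₂ _ (hI y hy a).2 (hJ z hz b).2

variable {ι : Type*} [DecidableEq ι] {b : Module.Basis ι R A₁}

theorem IsNaturalBasis.tmul_mul_eq (hb : IsNaturalBasis b) (i : ι) (y : A₂) (u : A₁ ⊗[R] A₂) :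
    (b i ⊗ₜ y) * u =
      (b i * b i) ⊗ₜ (y * TensorProduct.equivFinsuppOfBasisLeft b u i) := by
  induction u with
  | zero => simp
  | add u v hu hv => simp only [mul_add, map_add, Finsupp.add_apply, TensorProduct.tmul_add, hu, hv]
  | tmul a c =>
    rw [Algebra.TensorProduct.tmul_mul_tmul, hb.basis_mul_eq_smul,
      TensorProduct.equivFinsuppOfBasisLeft_apply_tmul_apply, mul_smul_comm,
      TensorProduct.smul_tmul]

theorem IsNaturalBasis.mul_tmul_eq (hb : IsNaturalBasis b) (i : ι) (y : A₂) (u : A₁ ⊗[R] A₂) :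
    u * (b i ⊗ₜ y) =
      (b i * b i) ⊗ₜ (TensorProduct.equivFinsuppOfBasisLeft b u i * y) := by
  induction u with
  | zero => simp
  | add u v hu hv => simp only [add_mul, map_add, Finsupp.add_apply, TensorProduct.tmul_add, hu, hv]
  | tmul a c =>
    rw [Algebra.TensorProduct.tmul_mul_tmul, hb.mul_basis_eq_smul,
      TensorProduct.equivFinsuppOfBasisLeft_apply_tmul_apply, smul_mul_assoc,
      TensorProduct.smul_tmul]

end TensorIdeals

section IntermediateIdeals

variable {K A₁ A₂ : Type*} [Field K]
  [NonUnitalNonAssocRing A₁] [Module K A₁] [SMulCommClass K A₁ A₁] [IsScalarTower K A₁ A₁]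
  [NonUnitalNonAssocRing A₂] [Module K A₂] [SMulCommClass K A₂ A₂] [IsScalarTower K A₂ A₂]

theorem exists_isTwoSidedIdeal_between_of_left (hA₂ : 1 < Module.rank K A₂)
    {L : Submodule K A₁} (hL : IsTwoSidedIdeal L) (hbot : L ≠ ⊥) (htop : L ≠ ⊤)
    {u : A₁ ⊗[K] A₂} (hu : IsTwoSidedIdeal (Submodule.span K {u})) :
    ∃ J : Submodule K (A₁ ⊗[K] A₂), IsTwoSidedIdeal J ∧ Submodule.span K {u} < J ∧ J < ⊤ := by
  obtain ⟨B, hB⟩ := exists_map₂_top_eq_top (N := A₂) hbot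
  obtain ⟨C, hC, hCtop⟩ := exists_map₂_top_eq_bot (N := A₂) htop
  exact ⟨_, (hL.map₂_mk isTwoSidedIdeal_top).sup hu, span_singleton_lt_map₂_mk_sup hA₂ hB u,
    map₂_mk_sup_span_singleton_lt_top hA₂ hC hCtop u⟩

theorem exists_isTwoSidedIdeal_between_of_right (hA₁ : 1 < Module.rank K A₁)
    {L : Submodule K A₂} (hL : IsTwoSidedIdeal L) (hbot : L ≠ ⊥) (htop : L ≠ ⊤)
    {u : A₁ ⊗[K] A₂} (hu : IsTwoSidedIdeal (Submodule.span K {u})) :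
    ∃ J : Submodule K (A₁ ⊗[K] A₂), IsTwoSidedIdeal J ∧ Submodule.span K {u} < J ∧ J < ⊤ := by
  obtain ⟨B, hB⟩ := exists_map₂_top_eq_top (N := A₁) hbot
  obtain ⟨C, hC, hCtop⟩ := exists_map₂_top_eq_bot (N := A₁) htop
  rw [← Submodule.map₂_flip] at hB hC hCtop
  exact ⟨_, (isTwoSidedIdeal_top.map₂_mk hL).sup hu, span_singleton_lt_map₂_mk_sup hA₁ hB u,
    map₂_mk_sup_span_singleton_lt_top hA₁ hC hCtop u⟩

end IntermediateIdeals

section CommutativeLeftFactor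

variable {K A₁ A₂ : Type*} [Field K]
  [NonUnitalNonAssocCommRing A₁] [Module K A₁] [SMulCommClass K A₁ A₁] [IsScalarTower K A₁ A₁]
  [NonUnitalNonAssocRing A₂] [Module K A₂] [SMulCommClass K A₂ A₂] [IsScalarTower K A₂ A₂]

theorem isTwoSidedIdeal_span_of_span_tmul {v : A₁} {w : A₂}
    (h : IsTwoSidedIdeal (Submodule.span K {v ⊗ₜ[K] w})) :
    IsTwoSidedIdeal (Submodule.span K {v}) ∨ IsTwoSidedIdeal (Submodule.span K {w}) := by
  refine or_iff_not_imp_right.2 fun hw ↦ ?_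
  obtain ⟨y, hy⟩ := exists_mul_ne_zero_of_not_isTwoSidedIdeal_span_singleton hw
  suffices hv : ∀ x : A₁, x * v ∈ Submodule.span K {v} from
    isTwoSidedIdeal_span_singleton hv fun x ↦ mul_comm x v ▸ hv x
  intro x
  have hmul := h (v ⊗ₜ w) (Submodule.mem_span_singleton_self _) (x ⊗ₜ y)
  rw [Algebra.TensorProduct.tmul_mul_tmul, Algebra.TensorProduct.tmul_mul_tmul, mul_comm v x]
    at hmul
  exact hy.elim (mem_span_singleton_of_tmul_mem_span_tmul hmul.1)
    (mem_span_singleton_of_tmul_mem_span_tmul hmul.2)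

theorem IsNaturalBasis.exists_isTwoSidedIdeal_span {ι : Type*} {b : Module.Basis ι K A₁}
    (hb : IsNaturalBasis b) {u : A₁ ⊗[K] A₂} (hu : u ≠ 0)
    (hI : IsTwoSidedIdeal (Submodule.span K {u})) :
    (∃ v : A₁, v ≠ 0 ∧ IsTwoSidedIdeal (Submodule.span K {v})) ∨
      ∃ w : A₂, w ≠ 0 ∧ IsTwoSidedIdeal (Submodule.span K {w}) := by
  classical
  obtain ⟨i, hi⟩ : ∃ i, TensorProduct.equivFinsuppOfBasisLeft b u i ≠ 0 :=
    DFunLike.ne_iff.1 ((LinearEquiv.map_ne_zero_iff _).2 hu)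
  set w := TensorProduct.equivFinsuppOfBasisLeft b u i
  by_cases hbi : IsTwoSidedIdeal (Submodule.span K {b i})
  · exact .inl ⟨b i, b.ne_zero i, hbi⟩
  by_cases hw : IsTwoSidedIdeal (Submodule.span K {w})
  · exact .inr ⟨w, hi, hw⟩
  have hsq := hb.mul_self_ne_zero_of_not_isTwoSidedIdeal_span_singleton hbi
  obtain ⟨z, hz, hmem⟩ : ∃ z : A₂, z ≠ 0 ∧ (b i * b i) ⊗ₜ[K] z ∈ Submodule.span K {u} := by
    obtain ⟨y, hy⟩ := exists_mul_ne_zero_of_not_isTwoSidedIdeal_span_singleton hw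
    have hmul := hI u (Submodule.mem_span_singleton_self u) (b i ⊗ₜ y)
    rw [hb.tmul_mul_eq, hb.mul_tmul_eq] at hmul
    exact hy.elim (⟨_, ·, hmul.1⟩) (⟨_, ·, hmul.2⟩)
  have hspan : Submodule.span K {(b i * b i) ⊗ₜ[K] z} = Submodule.span K {u} := by
    obtain ⟨c, hc⟩ := Submodule.mem_span_singleton.1 hmem
    have hc₀ : c ≠ 0 := by
      rintro rfl
      exact tmul_ne_zero_of_ne_zero hsq hz (hc.symm.trans (zero_smul K u))
    rw [← hc, Submodule.span_singleton_smul_eq hc₀.isUnit]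
  exact (isTwoSidedIdeal_span_of_span_tmul (hspan ▸ hI)).imp (⟨_, hsq, ·⟩) (⟨_, hz, ·⟩)

theorem tensor_quotient_by_line_not_simple_general {ι : Type*} (b : Module.Basis ι K A₁)
    (hb : IsNaturalBasis b) (hA₁ : 1 < Module.rank K A₁) (hA₂ : 1 < Module.rank K A₂)
    {u : A₁ ⊗[K] A₂} (hu : u ≠ 0) (hI : IsTwoSidedIdeal (Submodule.span K {u})) :
    ∃ J : Submodule K (A₁ ⊗[K] A₂), IsTwoSidedIdeal J ∧ Submodule.span K {u} < J ∧ J < ⊤ := by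
  obtain ⟨v, hv, hideal⟩ | ⟨w, hw, hideal⟩ := hb.exists_isTwoSidedIdeal_span hu hI
  · exact exists_isTwoSidedIdeal_between_of_left hA₂ hideal
      (mt Submodule.span_singleton_eq_bot.1 hv) (span_singleton_ne_top_of_one_lt_rank hA₁ v) hI
  · exact exists_isTwoSidedIdeal_between_of_right hA₁ hideal
      (mt Submodule.span_singleton_eq_bot.1 hw) (span_singleton_ne_top_of_one_lt_rank hA₂ w) hI

end CommutativeLeftFactor

/-- Let `A₁`, `A₂` be finite-dimensional evolution algebras over a field
`K`, each of dimension greater than `1`, and let `A = A₁ ⊗[K] A₂`.  If `I = K·u` is a nonzero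
(two-sided) ideal of `A`, then the quotient algebra `A/I` is not simple: via the ideal
correspondence, it is not the case that both `(A/I)² ≠ 0` (some product `x * y ∉ I`) and
every ideal of `A` lying between `I` and `A` equals `I` or `A`. -/
theorem tensor_quotient_by_line_not_simple {K A₁ A₂ : Type*} [Field K]
    [NonUnitalNonAssocCommRing A₁] [Module K A₁]
    [SMulCommClass K A₁ A₁] [IsScalarTower K A₁ A₁]
    [NonUnitalNonAssocCommRing A₂] [Module K A₂]
    [SMulCommClass K A₂ A₂] [IsScalarTower K A₂ A₂]
    {ι₁ ι₂ : Type*} [Fintype ι₁] [Fintype ι₂]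
    (b₁ : Module.Basis ι₁ K A₁) (hn₁ : ∀ i j : ι₁, i ≠ j → b₁ i * b₁ j = 0)
    (b₂ : Module.Basis ι₂ K A₂) (hn₂ : ∀ i j : ι₂, i ≠ j → b₂ i * b₂ j = 0)
    (hdim₁ : 1 < Module.finrank K A₁) (hdim₂ : 1 < Module.finrank K A₂)
    (u : A₁ ⊗[K] A₂) (hu : u ≠ 0)
    (hIdeal : ∀ x ∈ Submodule.span K {u}, ∀ a : A₁ ⊗[K] A₂,
      a * x ∈ Submodule.span K {u} ∧ x * a ∈ Submodule.span K {u}) :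
    ¬ ((∃ x y : A₁ ⊗[K] A₂, x * y ∉ Submodule.span K {u}) ∧
        ∀ J : Submodule K (A₁ ⊗[K] A₂), Submodule.span K {u} ≤ J →
          (∀ x ∈ J, ∀ a : A₁ ⊗[K] A₂, a * x ∈ J ∧ x * a ∈ J) →
          J = Submodule.span K {u} ∨ J = ⊤) := by
  rintro ⟨-, hmax⟩
  obtain ⟨J, hJ, hlt, hlt_top⟩ := tensor_quotient_by_line_not_simple_general b₁ hn₁
    (Module.one_lt_rank_of_one_lt_finrank hdim₁) (Module.one_lt_rank_of_one_lt_finrank hdim₂)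
    hu hIdeal
  exact (hmax J hlt.le hJ).elim hlt.ne' hlt_top.ne
end
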